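/- For every i ∈ Σ_{n+1} and every • ∈ {A, D}, there is a canonical injection GP(C_•(i)) ↪ GP(i), and its image is exactly the set of rigorous paths P of G(i) such that no switching node of P lies on the wire ℓ_•, where ℓ_D := ℓ_{n+1} and ℓ_A := ℓ_1. -/

import Mathlib

open scoped Classical

noncomputable section

namespace StringPolytope

/-! ### Words, reduced words, two-moves -/

/-- the simple transposition `s_a = (a, a+1)` acting on `ℕ` (wires are `1, …, n+1`). -/
def sTrans (a : ℕ) : Equiv.Perm ℕ := Equiv.swap a (a + 1)

/-- product `s_{i₁} ⋯ s_{i_N}` of the simple transpositions of a word. -/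
def wordProd (w : List ℕ) : Equiv.Perm ℕ := (w.map sTrans).prod

/-- the longest element `w₀` of the symmetric group on `{1, …, n+1}`,
sending `k ↦ n + 2 - k` there and fixing everything else. -/
def longestPerm (n : ℕ) : Equiv.Perm ℕ :=
  Function.Involutive.toPerm
    (fun k => if 1 ≤ k ∧ k ≤ n + 1 then n + 2 - k else k)
    (by intro k; dsimp only; split_ifs <;> omega)

/-- `w ∈ Σ_{n+1}`: a reduced word of the longest element of `S_{n+1}`,
i.e. a word over `[n] = {1,…,n}` of length `N = n(n+1)/2` whose product is `w₀`. -/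
def IsReduced (n : ℕ) (w : List ℕ) : Prop :=
  w.length = n * (n + 1) / 2 ∧ (∀ a ∈ w, 1 ≤ a ∧ a ≤ n) ∧ wordProd w = longestPerm n

/-- a single 2-move: exchange two adjacent letters `(a, b)` with `|a - b| > 1`. -/
def TwoMoveStep (w w' : List ℕ) : Prop :=
  ∃ u v a b, (a + 1 < b ∨ b + 1 < a) ∧ w = u ++ a :: b :: v ∧ w' = u ++ b :: a :: v

/-- 2-move equivalence of words. -/
def TwoMoveEquiv : List ℕ → List ℕ → Prop := Relation.ReflTransGen TwoMoveStep

/-- `A_n = (1, 2, …, n)`. -/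
def ascWord (n : ℕ) : List ℕ := (List.range n).map (· + 1)

/-- `D_n = (n, n-1, …, 1)`. -/
def descWord (n : ℕ) : List ℕ := (ascWord n).reverse

/-! ### The wiring diagram -/

/-- the letter `i_j` of `w` (1-based index `j`); the node `t_j` lies in column `i_j`. -/
def letterAt (w : List ℕ) (j : ℕ) : ℕ := w.getD (j - 1) 0

/-- `1 ≤ j ≤ N`: `t_j` is an actual node of the diagram. -/
def ValidNode (w : List ℕ) (j : ℕ) : Prop := 1 ≤ j ∧ j ≤ w.length

/-- the column-to-wire assignment just above node `t_j`
(at the top of the diagram, wire `k` is in column `k`). -/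
def stateAbove (w : List ℕ) (j : ℕ) : Equiv.Perm ℕ := wordProd (w.take (j - 1))

/-- the column-to-wire assignment just below node `t_j`. -/
def stateBelow (w : List ℕ) (j : ℕ) : Equiv.Perm ℕ := wordProd (w.take j)

/-- one of the two wires crossing at node `t_j` (the one leaving upward-left). -/
def wireX (w : List ℕ) (j : ℕ) : ℕ := stateAbove w j (letterAt w j)

/-- the other wire crossing at node `t_j` (the one leaving upward-right). -/
def wireY (w : List ℕ) (j : ℕ) : ℕ := stateAbove w j (letterAt w j + 1)

/-- the node `t_j` lies on the wire `ℓ_r`. -/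
def NodeOnWire (w : List ℕ) (j r : ℕ) : Prop := wireX w j = r ∨ wireY w j = r

/-- given one wire `r` at node `t_j`, the other wire crossing there. -/
def otherWire (w : List ℕ) (j r : ℕ) : ℕ := if wireX w j = r then wireY w j else wireX w j

/-- the column of wire `ℓ_r` at the height of node `t_j`. -/
def wireCol (w : List ℕ) (j r : ℕ) : ℕ := (stateBelow w j).symm r

/-- node `t_j` lies strictly below the wire `ℓ_{n+1}`
(which runs from the bottom-left corner to the top-right corner). -/
def BelowWireLast (n : ℕ) (w : List ℕ) (j : ℕ) : Prop :=
  wireCol w j (n + 1) < letterAt w j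

/-- node `t_j` lies strictly above the wire `ℓ_{n+1}`. -/
def AboveWireLast (n : ℕ) (w : List ℕ) (j : ℕ) : Prop :=
  letterAt w j + 1 < wireCol w j (n + 1)

/-- node `t_j` lies strictly below the wire `ℓ_1`
(which runs from the bottom-right corner to the top-left corner). -/
def BelowWireOne (w : List ℕ) (j : ℕ) : Prop :=
  letterAt w j + 1 < wireCol w j 1

/-- node `t_j` lies strictly above the wire `ℓ_1`. -/
def AboveWireOne (w : List ℕ) (j : ℕ) : Prop :=
  wireCol w j 1 < letterAt w j

/-! ### Rigorous (Gleizer–Postnikov) paths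

A path in `G(i, k)` is encoded by `k` together with the list of its switching
nodes, in order of travel.  Wires `ℓ_1, …, ℓ_k` are oriented upward
(decreasing node index) and the remaining wires downward. -/

/-- the (1-based indices of the) nodes lying on wire `ℓ_r`, in order of increasing index. -/
def nodesOn (w : List ℕ) (r : ℕ) : List ℕ :=
  ((List.range w.length).map (· + 1)).filter (fun j => decide (NodeOnWire w j r))

/-- nodes on wire `ℓ_r` strictly between the nodes `t_a` and `t_b`. -/
def segList (w : List ℕ) (r a b : ℕ) : List ℕ :=
  (nodesOn w r).filter (fun j => decide (min a b < j ∧ j < max a b))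

/-- nodes on wire `ℓ_r` strictly below the node `t_a`. -/
def tailList (w : List ℕ) (r a : ℕ) : List ℕ :=
  (nodesOn w r).filter (fun j => decide (a < j))

/-- a forbidden fragment of `G(i, k)`: the path passes straight through node `t_j`
travelling along the wire `ℓ_r`, where the other wire `ℓ_b` crossing there has the same
orientation as `ℓ_r` and (`r < b` if both upward, `r > b` if both downward). -/
def Forbidden (w : List ℕ) (k j r : ℕ) : Prop :=
  (r ≤ k ∧ otherWire w j r ≤ k ∧ r < otherWire w j r) ∨
  (k < r ∧ k < otherWire w j r ∧ otherWire w j r < r)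

/-- travelling in `G(i,k)`: currently on wire `ℓ_r` at node `t_a` (just switched there),
with future switching nodes `ms`; the travel is legal and ends at `L_{k+1}`. -/
def TravelOK (w : List ℕ) (k : ℕ) : ℕ → ℕ → List ℕ → Prop
  | r, a, [] => r = k + 1 ∧ ∀ j ∈ tailList w r a, ¬ Forbidden w k j r
  | r, a, m :: ms =>
      ValidNode w m ∧ NodeOnWire w m r ∧
      (if r ≤ k then m < a else a < m) ∧
      (∀ j ∈ segList w r a m, ¬ Forbidden w k j r) ∧
      TravelOK w k (otherWire w m r) m ms

/-- all nodes visited after the switch at node `t_a` onto wire `ℓ_r`. -/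
def visitTail (w : List ℕ) : ℕ → ℕ → List ℕ → List ℕ
  | r, a, [] => tailList w r a
  | r, a, m :: ms => segList w r a m ++ m :: visitTail w (otherWire w m r) m ms

/-- the list of all nodes visited by the path (switching nodes and straight passes). -/
def visitList (w : List ℕ) (k : ℕ) : List ℕ → List ℕ
  | [] => []
  | m :: ms => tailList w k m ++ m :: visitTail w (otherWire w m k) m ms

/-- `(k, ms)` encodes a rigorous (Gleizer–Postnikov) path in `G(i, k)`:
it starts at `L_k` going up the wire `ℓ_k`, switches wires exactly at the nodes
listed in `ms`, respects the orientation, ends at `L_{k+1}`, contains no forbidden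
fragment and passes through each node at most once. -/
def IsGPPath (n : ℕ) (w : List ℕ) (k : ℕ) (ms : List ℕ) : Prop :=
  1 ≤ k ∧ k ≤ n ∧
  (match ms with
   | [] => False
   | m :: rest =>
       ValidNode w m ∧ NodeOnWire w m k ∧
       (∀ j ∈ tailList w k m, ¬ Forbidden w k j k) ∧
       TravelOK w k (otherWire w m k) m rest) ∧
  (visitList w k ms).Nodup

/-- the set `GP(i)` of all rigorous paths of `G(i)`. -/
def GP (n : ℕ) (w : List ℕ) : Set (ℕ × List ℕ) := {p | IsGPPath n w p.1 p.2}

/-- `|GP(i)|`, the number of rigorous paths. -/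
def numGP (n : ℕ) (w : List ℕ) : ℕ := (GP n w).ncard

/-- the successive switches of a path: `(node, from-wire, to-wire)`. -/
def pathSwitches (w : List ℕ) : ℕ → List ℕ → List (ℕ × ℕ × ℕ)
  | _, [] => []
  | r, m :: ms => (m, r, otherWire w m r) :: pathSwitches w (otherWire w m r) ms

/-- the wire-expression of a path: the successive wires travelled. -/
def wireSeq (w : List ℕ) : ℕ → List ℕ → List ℕ
  | r, [] => [r]
  | r, m :: ms => r :: wireSeq w (otherWire w m r) ms

/-- the peaks of a path: switching nodes where the path switches from an
upward wire to a downward wire. -/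
def peaks (w : List ℕ) (k : ℕ) (ms : List ℕ) : List ℕ :=
  ((pathSwitches w k ms).filter (fun e => decide (e.2.1 ≤ k ∧ k < e.2.2))).map (·.1)

/-! ### String cone, `λ`-cone, string polytope -/

/-- `N = n(n+1)/2`, the number of nodes. -/
abbrev Dim (n : ℕ) : ℕ := n * (n + 1) / 2

/-- the coefficient `a_j` of `t_j` in the string inequality of the path `(k, ms)`:
`+1` if the path switches at `t_j` from `ℓ_r` to `ℓ_s` with `r < s`,
`-1` if it switches with `r > s`, and `0` otherwise. -/
def coeff (w : List ℕ) (k : ℕ) (ms : List ℕ) (j : ℕ) : ℝ :=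
  ((pathSwitches w k ms).map (fun e =>
    if e.1 = j then (if e.2.1 < e.2.2 then (1 : ℝ) else -1) else 0)).sum

/-- the (primitive inward normal) coefficient vector of the string inequality of a path. -/
def normalVec (n : ℕ) (w : List ℕ) (p : ℕ × List ℕ) : Fin (Dim n) → ℝ :=
  fun j => coeff w p.1 p.2 ((j : ℕ) + 1)

/-- the left-hand side `∑ a_j t_j` of the string inequality of the path `p`. -/
def stringIneq (n : ℕ) (w : List ℕ) (p : ℕ × List ℕ) (t : Fin (Dim n) → ℝ) : ℝ :=
  ∑ j : Fin (Dim n), normalVec n w p j * t j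

/-- the string cone `C_i ⊆ ℝ^N`. -/
def stringCone (n : ℕ) (w : List ℕ) : Set (Fin (Dim n) → ℝ) :=
  {t | ∀ p ∈ GP n w, 0 ≤ stringIneq n w p t}

/-- the polyhedron cut out by all string inequalities except the one of `p₀`. -/
def stringConeExcept (n : ℕ) (w : List ℕ) (p₀ : ℕ × List ℕ) : Set (Fin (Dim n) → ℝ) :=
  {t | ∀ p ∈ GP n w, p ≠ p₀ → 0 ≤ stringIneq n w p t}

/-- the coefficient `a_k` in the `λ`-inequality of node `t_j`:
`1` if `t_k` is one column left or right of `t_j`, `-2` if in the same column. -/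
def lamCoeff (w : List ℕ) (j k : ℕ) : ℝ :=
  if letterAt w k = letterAt w j then -2
  else if letterAt w k = letterAt w j + 1 ∨ letterAt w k + 1 = letterAt w j then 1
  else 0

/-- the `λ`-inequality of node `t_{j+1}`:
`t_j ≤ λ_{i_j} + ∑_{k > j} a_k t_k`. -/
def LamIneq (n : ℕ) (w : List ℕ) (lam : ℕ → ℤ) (j : Fin (Dim n)) (t : Fin (Dim n) → ℝ) : Prop :=
  t j ≤ (lam (letterAt w ((j : ℕ) + 1)) : ℝ) +
    ∑ k : Fin (Dim n),
      (if (j : ℕ) < (k : ℕ) then lamCoeff w ((j : ℕ) + 1) ((k : ℕ) + 1) else 0) * t k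

/-- the `λ`-cone `C_i^λ ⊆ ℝ^N`. -/
def lamCone (n : ℕ) (w : List ℕ) (lam : ℕ → ℤ) : Set (Fin (Dim n) → ℝ) :=
  {t | ∀ j, LamIneq n w lam j t}

/-- the polyhedron cut out by all `λ`-inequalities except the one of `j₀`. -/
def lamConeExcept (n : ℕ) (w : List ℕ) (lam : ℕ → ℤ) (j₀ : Fin (Dim n)) :
    Set (Fin (Dim n) → ℝ) :=
  {t | ∀ j, j ≠ j₀ → LamIneq n w lam j t}

/-- the string polytope `Δ_i(λ) = C_i ∩ C_i^λ`. -/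
def stringPolytope (n : ℕ) (w : List ℕ) (lam : ℕ → ℤ) : Set (Fin (Dim n) → ℝ) :=
  stringCone n w ∩ lamCone n w lam

/-- `λ = λ_1 ϖ_1 + ⋯ + λ_n ϖ_n` is a dominant integral weight: all `λ_j ≥ 0`. -/
def Dominant (n : ℕ) (lam : ℕ → ℤ) : Prop := ∀ j, 1 ≤ j → j ≤ n → 0 ≤ lam j

/-- `λ` is a regular dominant integral weight: all `λ_j > 0`. -/
def RegularDominant (n : ℕ) (lam : ℕ → ℤ) : Prop := ∀ j, 1 ≤ j → j ≤ n → 0 < lam j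

/-! ### Unimodular equivalence, Gelfand–Cetlin polytope, facets -/

/-- `P` and `Q` are unimodularly equivalent: `Q = M(P) + v` with `M ∈ GL(m, ℤ)`, `v ∈ ℤ^m`. -/
def UnimodEquiv {m : ℕ} (P Q : Set (Fin m → ℝ)) : Prop :=
  ∃ (M : Matrix (Fin m) (Fin m) ℤ) (v : Fin m → ℤ), IsUnit M.det ∧
    Q = (fun x i => (∑ j, (M i j : ℝ) * x j) + (v i : ℝ)) '' P

/-- the entry `x_{k,j}` (`1 ≤ j ≤ k ≤ n+1`) of a Gelfand–Cetlin pattern, where the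
top row is `x_{n+1,j} = λ_j + ⋯ + λ_n` and `x_{n+1,n+1} = 0`; the pair `(k, j)` is
encoded as the coordinate `k(k-1)/2 + (j-1)` of `ℝ^N`. -/
def gcX (n : ℕ) (lam : ℕ → ℤ) (x : Fin (Dim n) → ℝ) (k j : ℕ) : ℝ :=
  if k = n + 1 then (if j ≤ n then ∑ t ∈ Finset.Icc j n, (lam t : ℝ) else 0)
  else if h : k * (k - 1) / 2 + (j - 1) < Dim n then x ⟨k * (k - 1) / 2 + (j - 1), h⟩ else 0

/-- the Gelfand–Cetlin polytope `GC(λ) ⊆ ℝ^N`. -/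
def GCPolytope (n : ℕ) (lam : ℕ → ℤ) : Set (Fin (Dim n) → ℝ) :=
  {x | ∀ k j, 1 ≤ k → k ≤ n → 1 ≤ j → j ≤ k →
      gcX n lam x k j ≤ gcX n lam x (k + 1) j ∧
      gcX n lam x (k + 1) (j + 1) ≤ gcX n lam x k j}

/-- a face of a convex set: a convex extreme subset. -/
def IsFaceSet {m : ℕ} (S F : Set (Fin m → ℝ)) : Prop := IsExtreme ℝ S F ∧ Convex ℝ F

/-- a facet: a maximal proper face. -/
def IsFacet {m : ℕ} (S F : Set (Fin m → ℝ)) : Prop :=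
  IsFaceSet S F ∧ F ≠ S ∧ ∀ G, IsFaceSet S G → G ≠ S → F ⊆ G → F = G

/-- the number of facets. -/
def numFacets {m : ℕ} (S : Set (Fin m → ℝ)) : ℕ := {F | IsFacet S F}.ncard

/-- combinatorial equivalence: an inclusion-preserving bijection between face lattices. -/
def CombEquiv {m : ℕ} (S T : Set (Fin m → ℝ)) : Prop :=
  ∃ e : {F // IsFaceSet S F} ≃ {F // IsFaceSet T F},
    ∀ F G : {F // IsFaceSet S F}, F.1 ⊆ G.1 ↔ (e F).1 ⊆ (e G).1

/-! ### Indices, contractions and extensions -/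

/-- the `D`-index `ind_D(i) = |i_D^+|` for a decomposition `i ∼ i_D^- D_n i_D^+`
(independent of the decomposition). -/
def indD (n : ℕ) (w : List ℕ) : ℕ :=
  sInf {s | ∃ u v : List ℕ, v.length = s ∧ TwoMoveEquiv w (u ++ descWord n ++ v)}

/-- the `A`-index `ind_A(i) = |i_A^+|` for a decomposition `i ∼ i_A^- A_n i_A^+`. -/
def indA (n : ℕ) (w : List ℕ) : ℕ :=
  sInf {s | ∃ u v : List ℕ, v.length = s ∧ TwoMoveEquiv w (u ++ ascWord n ++ v)}

/-- `w'` is a `D`-contraction `C_D(w) = i_D^- (i_D^+ - 1)` of `w ∈ Σ_{n+1}`. -/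
def IsContractionD (n : ℕ) (w w' : List ℕ) : Prop :=
  ∃ u v : List ℕ, TwoMoveEquiv w (u ++ descWord n ++ v) ∧ w' = u ++ v.map (· - 1)

/-- `w'` is an `A`-contraction `C_A(w) = (i_A^- - 1) i_A^+` of `w ∈ Σ_{n+1}`. -/
def IsContractionA (n : ℕ) (w w' : List ℕ) : Prop :=
  ∃ u v : List ℕ, TwoMoveEquiv w (u ++ ascWord n ++ v) ∧ w' = u.map (· - 1) ++ v

/-- the `D`-extension `E_D(s) : Σ_{n+1} → Σ_{n+2}`,
`i = i^-(s) i^+(s) ↦ i^-(s) D_{n+1} (i^+(s) + 1)` where `|i^+(s)| = s`. -/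
def extD (n : ℕ) (s : ℕ) (w : List ℕ) : List ℕ :=
  w.take (w.length - s) ++ descWord (n + 1) ++ (w.drop (w.length - s)).map (· + 1)

/-- the `A`-extension `E_A(s) : Σ_{n+1} → Σ_{n+2}`,
`i = i^-(s) i^+(s) ↦ (i^-(s) + 1) A_{n+1} i^+(s)`. -/
def extA (n : ℕ) (s : ℕ) (w : List ℕ) : List ℕ :=
  (w.take (w.length - s)).map (· + 1) ++ ascWord (n + 1) ++ w.drop (w.length - s)

/-- there exists `(σ_1, …, σ_n) ∈ {A, D}^n` (here `true = D`, `false = A`) such that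
`ind_{σ_k}(C_{σ_{k+1}} ∘ ⋯ ∘ C_{σ_n}(i)) = 0` for all `k = n, …, 1`. -/
def SimplicialWord (n : ℕ) (w : List ℕ) : Prop :=
  ∃ (σ : ℕ → Bool) (c : ℕ → List ℕ), c n = w ∧
    ∀ k, 1 ≤ k → k ≤ n →
      (if σ k then IsContractionD k (c k) (c (k - 1)) ∧ indD k (c k) = 0
       else IsContractionA k (c k) (c (k - 1)) ∧ indA k (c k) = 0)


/-- the `D`-coindex `coind_D(i) = |i_D^-|`. -/
def coindD (n : ℕ) (w : List ℕ) : ℕ :=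
  sInf {s | ∃ u v : List ℕ, u.length = s ∧ TwoMoveEquiv w (u ++ descWord n ++ v)}

/-- the `A`-coindex `coind_A(i) = |i_A^-|`. -/
def coindA (n : ℕ) (w : List ℕ) : ℕ :=
  sInf {s | ∃ u v : List ℕ, u.length = s ∧ TwoMoveEquiv w (u ++ ascWord n ++ v)}

/-- the `a`-th (0-based) coordinate of a point of `ℝ^N`. -/
def entry (n : ℕ) (t : Fin (Dim n) → ℝ) (a : ℕ) : ℝ :=
  if h : a < Dim n then t ⟨a, h⟩ else 0

/-- the product of cones
`t_1 ≥ 0`, `t_2 ≥ t_3 ≥ 0`, …, `t_{N-n+1} ≥ ⋯ ≥ t_N ≥ 0` (in `ℝ^N`, 1-based: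
for `k = 1, …, n` the chain `t_{k(k-1)/2+1} ≥ ⋯ ≥ t_{k(k-1)/2+k} ≥ 0`). -/
def chainCone (n : ℕ) : Set (Fin (Dim n) → ℝ) :=
  {t | ∀ k j, 1 ≤ k → k ≤ n → 1 ≤ j → j ≤ k →
    (if j = k then 0 else entry n t (k * (k - 1) / 2 + j)) ≤
      entry n t (k * (k - 1) / 2 + (j - 1))}

/-! ### Proof: words and states -/

lemma wordProd_nil : wordProd [] = 1 := rfl

lemma wordProd_cons (a : ℕ) (w : List ℕ) (x : ℕ) :
    wordProd (a :: w) x = sTrans a (wordProd w x) := by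
  simp [wordProd]

lemma wordProd_append (u v : List ℕ) (x : ℕ) :
    wordProd (u ++ v) x = wordProd u (wordProd v x) := by
  simp [wordProd]

lemma sTrans_apply (a x : ℕ) :
    sTrans a x = if x = a then a + 1 else if x = a + 1 then a else x := by
  simp [sTrans, Equiv.swap_apply_def]

lemma wordProd_concat (u : List ℕ) (a x : ℕ) :
    wordProd (u ++ [a]) x = wordProd u (sTrans a x) := by
  rw [wordProd_append, wordProd_cons]; rfl

lemma wordProd_mem (lo hi : ℕ) (w : List ℕ) (hw : ∀ a ∈ w, lo ≤ a ∧ a + 1 ≤ hi) (x : ℕ)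
    (hx : lo ≤ x ∧ x ≤ hi) : lo ≤ wordProd w x ∧ wordProd w x ≤ hi := by
  induction w with
  | nil => simpa [wordProd_nil] using hx
  | cons a w ih =>
    rw [wordProd_cons, sTrans_apply]
    have h1 := ih (fun b hb => hw b (List.mem_cons_of_mem _ hb))
    have h2 := hw a List.mem_cons_self
    split_ifs <;> omega

lemma wordProd_shift (w : List ℕ) (hw : ∀ a ∈ w, 1 ≤ a) (x : ℕ) :
    wordProd w (x + 1) = wordProd (w.map (· - 1)) x + 1 := by
  induction w with
  | nil => rfl
  | cons a w ih =>
    rw [List.map_cons, wordProd_cons, wordProd_cons,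
      ih (fun b hb => hw b (List.mem_cons_of_mem _ hb)), sTrans_apply, sTrans_apply]
    have h2 := hw a List.mem_cons_self
    split_ifs <;> omega

lemma valid_split (w : List ℕ) (t : ℕ) (h : ValidNode w t) :
    ∃ p l q, w = p ++ l :: q ∧ t = p.length + 1 := by
  obtain ⟨h1, h2⟩ := h
  refine ⟨w.take (t - 1), w[t - 1]'(by omega), w.drop t, ?_, ?_⟩
  · have := List.drop_eq_getElem_cons (l := w) (i := t - 1) (by omega)
    rw [show t - 1 + 1 = t by omega] at this
    rw [← this, List.take_append_drop]
  · simp; omega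

lemma valid_mk {w p q : List ℕ} {l t : ℕ} (hw : w = p ++ l :: q) (ht : t = p.length + 1) :
    ValidNode w t := by
  subst hw ht; constructor <;> simp

lemma wireX_at {w p q : List ℕ} {l t : ℕ} (hw : w = p ++ l :: q) (ht : t = p.length + 1) :
    wireX w t = wordProd p l := by
  subst hw ht
  simp [wireX, stateAbove, letterAt]

lemma wireY_at {w p q : List ℕ} {l t : ℕ} (hw : w = p ++ l :: q) (ht : t = p.length + 1) :
    wireY w t = wordProd p (l + 1) := by
  subst hw ht
  simp [wireY, stateAbove, letterAt]

lemma wireX_ne_wireY (w : List ℕ) (t : ℕ) : wireX w t ≠ wireY w t := by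
  intro h
  have := (stateAbove w t).injective h
  omega

/-- wire bounds -/
lemma wire_bounds {n : ℕ} {w : List ℕ} (hw : ∀ a ∈ w, 1 ≤ a ∧ a ≤ n) (t : ℕ)
    (ht : ValidNode w t) :
    (1 ≤ wireX w t ∧ wireX w t ≤ n + 1) ∧ (1 ≤ wireY w t ∧ wireY w t ≤ n + 1) := by
  obtain ⟨p, l, q, rfl, h⟩ := valid_split w t ht
  rw [wireX_at rfl h, wireY_at rfl h]
  have hl := hw l (by simp)
  have hp : ∀ a ∈ p, 1 ≤ a ∧ a + 1 ≤ n + 1 := fun a ha => by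
    have := hw a (by simp [ha]); omega
  exact ⟨wordProd_mem 1 (n + 1) p hp _ (by omega), wordProd_mem 1 (n + 1) p hp _ (by omega)⟩

/-! ### Each pair of wires crosses once -/

lemma no_flip (p : List ℕ) : ∀ (q : List ℕ) (a b : ℕ),
    (∀ t, ValidNode (p ++ q) t → t ≤ p.length →
      ¬ (wireX (p ++ q) t = a ∧ wireY (p ++ q) t = b)) →
    a < b → (wordProd p).symm a < (wordProd p).symm b := by
  induction p using List.reverseRecOn with
  | nil => intro q a b _ h; exact h
  | append_singleton p l ih =>
    intro q a b hno hab
    have h1 := ih (l :: q) a b (fun t ht htl => by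
      have := hno t (by simpa using ht) (by simp; omega)
      simpa using this) hab
    have h2 := hno (p.length + 1) (valid_mk (p := p) (l := l) (q := q) (by simp) rfl) (by simp)
    rw [wireX_at (p := p) (l := l) (q := q) (by simp) rfl,
      wireY_at (p := p) (l := l) (q := q) (by simp) rfl] at h2
    have key : ∀ c, (wordProd (p ++ [l])).symm c = sTrans l ((wordProd p).symm c) := by
      intro c
      rw [Equiv.symm_apply_eq, wordProd_concat]
      simp [sTrans]
    rw [key, key]
    have h3 : ¬ ((wordProd p).symm a = l ∧ (wordProd p).symm b = l + 1) := by
      rintro ⟨e1, e2⟩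
      apply h2
      rw [Equiv.symm_apply_eq] at e1 e2
      exact ⟨e1.symm, e2.symm⟩
    rw [sTrans_apply, sTrans_apply]
    split_ifs <;> omega

lemma cross_unique {n : ℕ} {w : List ℕ} (hw : IsReduced n w) (j j' : ℕ)
    (hj : ValidNode w j) (hj' : ValidNode w j')
    (h : ({wireX w j, wireY w j} : Finset ℕ) = {wireX w j', wireY w j'}) : j = j' := by
  obtain ⟨hlen, hlet, hprod⟩ := hw
  let f : ℕ → Finset ℕ := fun j => {wireX w j, wireY w j}
  have hsub : Finset.powersetCard 2 (Finset.Icc 1 (n + 1)) ⊆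
      (Finset.Icc 1 w.length).image f := by
    intro s hs
    rw [Finset.mem_powersetCard] at hs
    obtain ⟨hs1, hs2⟩ := hs
    obtain ⟨a, b, hab, rfl⟩ := Finset.card_eq_two.mp hs2
    have key : ∀ a b, a ∈ Finset.Icc 1 (n + 1) → b ∈ Finset.Icc 1 (n + 1) → a < b →
        ({a, b} : Finset ℕ) ∈ (Finset.Icc 1 w.length).image f := by
      intro a b ha hb hab
      rw [Finset.mem_Icc] at ha hb
      by_contra hcon
      have := no_flip w [] a b (fun t ht _ hc => hcon (by
        rw [Finset.mem_image]
        rw [List.append_nil] at ht hc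
        exact ⟨t, Finset.mem_Icc.mpr ht, by simp [f, hc.1, hc.2]⟩)) hab
      have hl : ∀ c, 1 ≤ c ∧ c ≤ n + 1 → (longestPerm n).symm c = n + 2 - c := by
        intro c hc
        rw [Equiv.symm_apply_eq]
        change c = if 1 ≤ n + 2 - c ∧ n + 2 - c ≤ n + 1 then n + 2 - (n + 2 - c) else n + 2 - c
        rw [if_pos (by omega)]
        omega
      rw [hprod, hl a ha, hl b hb] at this
      omega
    have ha := hs1 (show a ∈ ({a, b} : Finset ℕ) by simp)
    have hb := hs1 (show b ∈ ({a, b} : Finset ℕ) by simp)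
    rcases lt_or_gt_of_ne hab with h | h
    · exact key a b ha hb h
    · rw [Finset.pair_comm]; exact key b a hb ha h
  have hc := Finset.card_le_card hsub
  rw [Finset.card_powersetCard, Nat.card_Icc, Nat.choose_two_right] at hc
  have hinj : Set.InjOn f (Finset.Icc 1 w.length) := by
    apply Finset.card_image_iff.mp
    apply le_antisymm Finset.card_image_le
    rw [Nat.card_Icc]
    simp only [Nat.add_sub_cancel] at hc ⊢
    rw [mul_comm, ← hlen] at hc; exact hc
  exact hinj (by simpa [ValidNode] using hj) (by simpa [ValidNode] using hj') h

/-- a wire without nodes stays in its column -/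
lemma no_cross (p q : List ℕ) (c r : ℕ) (hp : wordProd p c = r) : ∀ s : List ℕ,
    (∀ t, ValidNode (p ++ q ++ s) t → p.length < t → t ≤ p.length + q.length →
      ¬ NodeOnWire (p ++ q ++ s) t r) → wordProd (p ++ q) c = r := by
  induction q using List.reverseRecOn with
  | nil => intro s _; simpa using hp
  | append_singleton q l ih =>
    intro s hno
    have h1 := ih (l :: s) (fun t ht h1 h2 => by
      have := hno t (by simpa using ht) h1 (by simp; omega)
      simpa using this)
    have e : p ++ (q ++ [l]) ++ s = (p ++ q) ++ l :: s := by simp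
    have h2 := hno ((p ++ q).length + 1) (valid_mk e rfl)
      (by rw [List.length_append]; omega) (by simp only [List.length_append, List.length_cons, List.length_nil]; omega)
    rw [NodeOnWire, wireX_at e rfl, wireY_at e rfl] at h2
    rw [← List.append_assoc, wordProd_concat, sTrans_apply]
    push Not at h2
    split_ifs with h3 h4
    · subst h3; exact absurd h1 h2.1
    · subst h4; exact absurd h1 h2.2
    · exact h1

lemma longest_wire {n : ℕ} {u d v : List ℕ} (hw : IsReduced n (u ++ d ++ v)) (e : ℕ)
    (he : 1 ≤ e ∧ e ≤ n + 1)
    (hd : ∀ x, 1 ≤ x → x ≤ n + 1 → x ≠ e → ∃ j, u.length < j ∧ j ≤ u.length + d.length ∧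
      ({wireX (u ++ d ++ v) j, wireY (u ++ d ++ v) j} : Finset ℕ)
        = {wordProd u e, wordProd u x}) :
    wordProd u e = e ∧ ∀ j, ValidNode (u ++ d ++ v) j → NodeOnWire (u ++ d ++ v) j e →
      u.length < j ∧ j ≤ u.length + d.length := by
  have hu : ∀ a ∈ u, 1 ≤ a ∧ a + 1 ≤ n + 1 := fun a ha => by
    have := hw.2.1 a (by simp [ha]); omega
  have main : ∀ j, ValidNode (u ++ d ++ v) j → NodeOnWire (u ++ d ++ v) j (wordProd u e) →
      u.length < j ∧ j ≤ u.length + d.length := by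
    intro j hj hon
    have hb := wire_bounds hw.2.1 j hj
    have hne := wireX_ne_wireY (u ++ d ++ v) j
    obtain ⟨s, hs, hse, hpair⟩ : ∃ s, (1 ≤ s ∧ s ≤ n + 1) ∧ s ≠ wordProd u e ∧
        ({wireX (u ++ d ++ v) j, wireY (u ++ d ++ v) j} : Finset ℕ) = {wordProd u e, s} := by
      rcases hon with h | h
      · exact ⟨_, hb.2, by rw [← h]; exact hne.symm, by rw [h]⟩
      · exact ⟨_, hb.1, by rw [← h]; exact hne, by rw [h, Finset.pair_comm]⟩
    -- the column of s
    obtain ⟨x, hx1, hx2, hx⟩ : ∃ x, 1 ≤ x ∧ x ≤ n + 1 ∧ wordProd u x = s := by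
      have hmaps : ∀ x ∈ Finset.Icc 1 (n + 1), wordProd u x ∈ Finset.Icc 1 (n + 1) := by
        intro x hx
        rw [Finset.mem_Icc] at hx ⊢
        exact wordProd_mem 1 (n + 1) u hu x hx
      have := Finset.surj_on_of_inj_on_of_card_le (s := Finset.Icc 1 (n + 1))
        (t := Finset.Icc 1 (n + 1)) (fun x _ => wordProd u x) hmaps
        (fun a b _ _ h => (wordProd u).injective h) le_rfl s (Finset.mem_Icc.mpr hs)
      obtain ⟨x, hx, h⟩ := this
      rw [Finset.mem_Icc] at hx
      exact ⟨x, hx.1, hx.2, h.symm⟩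
    obtain ⟨j', h1, h2, h3⟩ := hd x hx1 hx2 (by rintro rfl; exact hse hx.symm)
    have : j = j' := cross_unique hw j j' hj ⟨by omega, by simp; omega⟩
      (by rw [h3, hpair, hx])
    omega
  have hfix : wordProd u (wordProd u e) = wordProd u e := by
    have := no_cross [] u (wordProd u e) (wordProd u e) rfl (d ++ v) (fun t ht _ h2 hon => by
      have e1 : [] ++ u ++ (d ++ v) = u ++ d ++ v := by simp
      rw [e1] at ht hon
      have := main t ht hon
      simp at h2
      omega)
    simpa using this
  have hfix' : wordProd u e = e := (wordProd u).injective hfix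
  exact ⟨hfix', by rwa [hfix'] at main⟩

lemma ascWord_split (n t : ℕ) (ht : t < n) :
    ∃ q, ascWord n = ascWord t ++ (t + 1) :: q := by
  obtain ⟨m, rfl⟩ : ∃ m, n = t + (1 + m) := ⟨n - t - 1, by omega⟩
  simp only [ascWord, List.range_add, List.map_append]
  exact ⟨List.map (· + 1) (List.map (t + ·) (List.map (1 + ·) (List.range m))), by
    simp [List.range_succ]⟩

lemma ascWord_prod (t x : ℕ) (hx : 1 ≤ x) :
    wordProd (ascWord t) x = if x ≤ t then x + 1 else if x = t + 1 then 1 else x := by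
  induction t generalizing x with
  | zero =>
    change x = _
    split_ifs <;> omega
  | succ t ih =>
    have : ascWord (t + 1) = ascWord t ++ [t + 1] := by simp [ascWord, List.range_succ]
    rw [this, wordProd_concat, sTrans_apply]
    split_ifs <;> rw [ih _ (by omega)] <;> split_ifs <;> omega

/-- the prefix of `descWord` of length `t` -/
def descPre (n t : ℕ) : List ℕ := (List.range t).map (fun s => n - s)

lemma descWord_eq (n : ℕ) : descWord n = descPre n n := by
  apply List.ext_getElem
  · simp [descWord, ascWord, descPre]
  · intro i h1 h2
    have h3 : i < n := by simpa [descPre] using h2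
    simp [descWord, ascWord, descPre]
    omega

lemma descWord_split (n t : ℕ) (ht : t < n) :
    ∃ q, descWord n = descPre n t ++ (n - t) :: q := by
  rw [descWord_eq]
  have : ∀ m, ∃ q, descPre n (t + (1 + m)) = descPre n t ++ (n - t) :: q := by
    intro m
    simp only [descPre, List.range_add, List.map_append]
    exact ⟨List.map (n - ·) (List.map (t + ·) (List.map (1 + ·) (List.range m))), by
      simp [List.range_succ]⟩
  obtain ⟨q, hq⟩ := this (n - t - 1)
  rw [show t + (1 + (n - t - 1)) = n by omega] at hq
  exact ⟨q, hq⟩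

lemma descPre_prod (n t x : ℕ) (ht : t ≤ n) (hx : x ≤ n + 1) :
    wordProd (descPre n t) x =
      if x ≤ n - t then x else if x = n - t + 1 then n + 1 else x - 1 := by
  induction t generalizing x with
  | zero =>
    change x = _
    split_ifs <;> omega
  | succ t ih =>
    have : descPre n (t + 1) = descPre n t ++ [n - t] := by simp [descPre, List.range_succ]
    rw [this, wordProd_concat, sTrans_apply]
    split_ifs <;> rw [ih _ (by omega) (by omega)] <;> split_ifs <;> omega

lemma ascWord_length (n : ℕ) : (ascWord n).length = n := by simp [ascWord]
lemma descPre_length (n t : ℕ) : (descPre n t).length = t := by simp [descPre]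
lemma descWord_length (n : ℕ) : (descWord n).length = n := by simp [descWord, ascWord]

/-! ### Morphisms of wiring diagrams -/

/-- `φ` embeds the diagram of `w'` (wires shifted by `c`) in that of `w`, the nodes missed
being those on the wire `ℓ`. -/
structure Good (n c ℓ : ℕ) (φ : ℕ → ℕ) (w' w : List ℕ) : Prop where
  inj : Function.Injective φ
  valid : ∀ j, ValidNode w (φ j) ↔ ValidNode w' j
  wx : ∀ j, ValidNode w' j → wireX w (φ j) = wireX w' j + c
  wy : ∀ j, ValidNode w' j → wireY w (φ j) = wireY w' j + c
  image : ∀ t, ValidNode w t → (¬ NodeOnWire w t ℓ ↔ ∃ j, φ j = t)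
  mono : ∀ j j' r, ValidNode w' j → ValidNode w' j' → NodeOnWire w' j r → NodeOnWire w' j' r →
    j < j' → φ j < φ j'
  bounds : ∀ t, ValidNode w t →
    (1 ≤ wireX w t ∧ wireX w t ≤ n + 1) ∧ (1 ≤ wireY w t ∧ wireY w t ≤ n + 1)

lemma mem_nodesOn (w : List ℕ) (r j : ℕ) :
    j ∈ nodesOn w r ↔ ValidNode w j ∧ NodeOnWire w j r := by
  simp only [nodesOn, List.mem_filter, List.mem_map, List.mem_range, decide_eq_true_eq, ValidNode]
  constructor
  · rintro ⟨⟨a, h1, rfl⟩, h2⟩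
    exact ⟨⟨by omega, by omega⟩, h2⟩
  · rintro ⟨⟨h1, h3⟩, h2⟩
    exact ⟨⟨j - 1, by omega, by omega⟩, h2⟩

lemma mem_segList (w : List ℕ) (r a b j : ℕ) :
    j ∈ segList w r a b ↔ (ValidNode w j ∧ NodeOnWire w j r) ∧ min a b < j ∧ j < max a b := by
  simp only [segList, List.mem_filter, mem_nodesOn, decide_eq_true_eq]

lemma mem_tailList (w : List ℕ) (r a j : ℕ) :
    j ∈ tailList w r a ↔ (ValidNode w j ∧ NodeOnWire w j r) ∧ a < j := by
  simp only [tailList, List.mem_filter, mem_nodesOn, decide_eq_true_eq]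

lemma nodup_nodesOn (w : List ℕ) (r : ℕ) : (nodesOn w r).Nodup := by
  apply List.Nodup.filter
  exact List.nodup_range.map (fun a b h => by simpa using h)

lemma nodup_segList (w : List ℕ) (r a b : ℕ) : (segList w r a b).Nodup :=
  (nodup_nodesOn w r).filter _

lemma nodup_tailList (w : List ℕ) (r a : ℕ) : (tailList w r a).Nodup :=
  (nodup_nodesOn w r).filter _

lemma nodeOn_other (w : List ℕ) (m r : ℕ) : NodeOnWire w m (otherWire w m r) := by
  unfold otherWire NodeOnWire
  split_ifs <;> simp

lemma two_wires {w : List ℕ} {x r s l : ℕ} (h1 : NodeOnWire w x r) (h2 : NodeOnWire w x s)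
    (h3 : NodeOnWire w x l) (hr : r ≠ l) (hs : s ≠ l) : r = s := by
  unfold NodeOnWire at *
  omega

lemma other_eq {w : List ℕ} {x r l : ℕ} (h1 : NodeOnWire w x r) (h2 : NodeOnWire w x l)
    (hr : r ≠ l) : otherWire w x r = l := by
  unfold otherWire
  unfold NodeOnWire at *
  split_ifs <;> omega

namespace Good

variable {n c ℓ : ℕ} {φ : ℕ → ℕ} {w' w : List ℕ}

lemma on (G : Good n c ℓ φ w' w) {j : ℕ} (hj : ValidNode w' j) (r : ℕ) :
    NodeOnWire w (φ j) (r + c) ↔ NodeOnWire w' j r := by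
  unfold NodeOnWire
  rw [G.wx j hj, G.wy j hj]
  omega

lemma other (G : Good n c ℓ φ w' w) {j : ℕ} (hj : ValidNode w' j) (r : ℕ) :
    otherWire w (φ j) (r + c) = otherWire w' j r + c := by
  unfold otherWire
  rw [G.wx j hj, G.wy j hj]
  split_ifs <;> omega

lemma lt_iff (G : Good n c ℓ φ w' w) {j j' r : ℕ} (hj : ValidNode w' j) (hj' : ValidNode w' j')
    (h : NodeOnWire w' j r) (h' : NodeOnWire w' j' r) : φ j < φ j' ↔ j < j' := by
  constructor
  · intro hlt
    rcases lt_trichotomy j j' with h1 | h1 | h1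
    · exact h1
    · subst h1; omega
    · have := G.mono j' j r hj' hj h' h h1; omega
  · exact G.mono j j' r hj hj' h h'

lemma not_on (G : Good n c ℓ φ w' w) {j : ℕ} (hj : ValidNode w' j) :
    ¬ NodeOnWire w (φ j) ℓ :=
  (G.image _ ((G.valid j).mpr hj)).mpr ⟨j, rfl⟩

lemma forb (G : Good n c ℓ φ w' w) {j : ℕ} (hj : ValidNode w' j) (k r : ℕ) :
    Forbidden w (k + c) (φ j) (r + c) ↔ Forbidden w' k j r := by
  unfold Forbidden
  rw [G.other hj]
  omega

lemma tail_mem (G : Good n c ℓ φ w' w) {a r x : ℕ} (ha : ValidNode w' a)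
    (har : NodeOnWire w' a r) :
    φ x ∈ tailList w (r + c) (φ a) ↔ x ∈ tailList w' r a := by
  rw [mem_tailList, mem_tailList, G.valid]
  constructor
  · rintro ⟨⟨h1, h2⟩, h3⟩
    rw [G.on h1] at h2
    exact ⟨⟨h1, h2⟩, (G.lt_iff ha h1 har h2).mp h3⟩
  · rintro ⟨⟨h1, h2⟩, h3⟩
    exact ⟨⟨h1, (G.on h1 r).mpr h2⟩, (G.lt_iff ha h1 har h2).mpr h3⟩

lemma seg_mem (G : Good n c ℓ φ w' w) {a b r x : ℕ} (ha : ValidNode w' a)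
    (har : NodeOnWire w' a r) (hb : ValidNode w' b) (hbr : NodeOnWire w' b r) :
    φ x ∈ segList w (r + c) (φ a) (φ b) ↔ x ∈ segList w' r a b := by
  rw [mem_segList, mem_segList, G.valid]
  simp only [min_lt_iff, lt_max_iff]
  constructor
  · rintro ⟨⟨h1, h2⟩, h3⟩
    rw [G.on h1] at h2
    rw [G.lt_iff ha h1 har h2, G.lt_iff hb h1 hbr h2, G.lt_iff h1 ha h2 har,
      G.lt_iff h1 hb h2 hbr] at h3
    exact ⟨⟨h1, h2⟩, h3⟩
  · rintro ⟨⟨h1, h2⟩, h3⟩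
    refine ⟨⟨h1, (G.on h1 r).mpr h2⟩, ?_⟩
    rw [G.lt_iff ha h1 har h2, G.lt_iff hb h1 hbr h2, G.lt_iff h1 ha h2 har,
      G.lt_iff h1 hb h2 hbr]
    exact h3

/-- a straight pass through a node on the removed wire is never forbidden -/
lemma pass (G : Good n c ℓ φ w' w) (hcl : (c = 0 ∧ ℓ = n + 1) ∨ (c = 1 ∧ ℓ = 1))
    {k x r : ℕ} (hk : 1 ≤ k) (hk' : k ≤ n - 1)
    (hx : ValidNode w x) (hr : NodeOnWire w x (r + c)) (hl : NodeOnWire w x ℓ)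
    (hrl : r + c ≠ ℓ) : ¬ Forbidden w (k + c) x (r + c) := by
  have hb := G.bounds x hx
  have hr' := hr
  unfold Forbidden
  rw [other_eq hr hl hrl]
  unfold NodeOnWire at hr'
  omega

lemma all_forb (G : Good n c ℓ φ w' w) (hcl : (c = 0 ∧ ℓ = n + 1) ∨ (c = 1 ∧ ℓ = 1))
    {k r : ℕ} (hk : 1 ≤ k) (hk' : k ≤ n - 1) (hrl : r + c ≠ ℓ) (S S' : List ℕ)
    (hS : ∀ x ∈ S, ValidNode w x ∧ NodeOnWire w x (r + c))
    (hS' : ∀ x ∈ S', ValidNode w' x)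
    (hSS : ∀ x, φ x ∈ S ↔ x ∈ S') :
    (∀ x ∈ S, ¬ Forbidden w (k + c) x (r + c)) ↔ ∀ x ∈ S', ¬ Forbidden w' k x r := by
  constructor
  · intro h x hx
    rw [← G.forb (hS' x hx)]
    exact h _ ((hSS x).mpr hx)
  · intro h x hx
    obtain ⟨h1, h2⟩ := hS x hx
    by_cases hl : NodeOnWire w x ℓ
    · exact G.pass hcl hk hk' h1 h2 hl hrl
    · obtain ⟨j, rfl⟩ := (G.image x h1).mp hl
      have hj := (hSS j).mp hx
      rw [G.forb (hS' j hj)]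
      exact h j hj

lemma ne_of_on (G : Good n c ℓ φ w' w) {a r : ℕ} (ha : ValidNode w' a)
    (har : NodeOnWire w' a r) : r + c ≠ ℓ := by
  intro h
  apply G.not_on ha
  rw [← h, G.on ha]
  exact har

lemma travel (G : Good n c ℓ φ w' w) (hcl : (c = 0 ∧ ℓ = n + 1) ∨ (c = 1 ∧ ℓ = 1))
    {k : ℕ} (hk : 1 ≤ k) (hk' : k ≤ n - 1) (ms : List ℕ) : ∀ (r a : ℕ),
    ValidNode w' a → NodeOnWire w' a r →
    (TravelOK w (k + c) (r + c) (φ a) (ms.map φ) ↔ TravelOK w' k r a ms) := by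
  induction ms with
  | nil =>
    intro r a ha har
    simp only [List.map_nil, TravelOK]
    refine and_congr (by omega) ?_
    apply G.all_forb hcl hk hk' (G.ne_of_on ha har)
    · intro x hx; exact ((mem_tailList _ _ _ _).mp hx).1
    · intro x hx; exact ((mem_tailList _ _ _ _).mp hx).1.1
    · intro x; exact G.tail_mem ha har
  | cons m ms ih =>
    intro r a ha har
    simp only [List.map_cons, TravelOK]
    rw [G.valid]
    apply and_congr_right
    intro hm
    rw [G.on hm]
    apply and_congr_right
    intro hmr
    rw [G.lt_iff ha hm har hmr, G.lt_iff hm ha hmr har, G.other hm]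
    refine and_congr (by simp) (and_congr ?_ (ih _ _ hm (nodeOn_other _ _ _)))
    apply G.all_forb hcl hk hk' (G.ne_of_on ha har)
    · intro x hx; exact ((mem_segList _ _ _ _ _).mp hx).1
    · intro x hx; exact ((mem_segList _ _ _ _ _).mp hx).1.1
    · intro x; exact G.seg_mem ha har hm hmr

lemma visit_mem (G : Good n c ℓ φ w' w) {k : ℕ} (x : ℕ) (ms : List ℕ) : ∀ (r a : ℕ),
    ValidNode w' a → NodeOnWire w' a r → TravelOK w' k r a ms →
    (φ x ∈ visitTail w (r + c) (φ a) (ms.map φ) ↔ x ∈ visitTail w' r a ms) := by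
  induction ms with
  | nil =>
    intro r a ha har _
    simp only [List.map_nil, visitTail]
    exact G.tail_mem ha har
  | cons m ms ih =>
    intro r a ha har hT
    obtain ⟨hm, hmr, _, _, hT'⟩ := hT
    simp only [List.map_cons, visitTail, List.mem_append, List.mem_cons]
    rw [G.seg_mem ha har hm hmr, G.other hm, ih _ _ hm (nodeOn_other _ _ _) hT', G.inj.eq_iff]

end Good

/-! ### Self-intersections on the removed wire -/

lemma visit_valid {w : List ℕ} {k : ℕ} (ms : List ℕ) : ∀ (s b : ℕ), TravelOK w k s b ms →
    ∀ x ∈ visitTail w s b ms, ValidNode w x := by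
  induction ms with
  | nil => intro s b _ x hx; exact ((mem_tailList _ _ _ _).mp hx).1.1
  | cons m ms ih =>
    intro s b hT x hx
    obtain ⟨hm, hms, hdir, _, hT'⟩ := hT
    simp only [visitTail, List.mem_append, List.mem_cons] at hx
    rcases hx with hx | rfl | hx
    · exact ((mem_segList _ _ _ _ _).mp hx).1.1
    · exact hm
    · exact ih _ _ hT' x hx

lemma visit_start {w : List ℕ} {k l r x : ℕ} (hxl : NodeOnWire w x l) (hxr : NodeOnWire w x r)
    (hrl : r ≠ l) (ms : List ℕ) : ∀ (s b : ℕ), TravelOK w k s b ms →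
    (∀ m ∈ ms, ¬ NodeOnWire w m l) → ValidNode w b → NodeOnWire w b s → ¬ NodeOnWire w b l →
    x ∈ visitTail w s b ms →
    ∃ a' ∈ b :: visitTail w s b ms, ValidNode w a' ∧ NodeOnWire w a' r ∧ ¬ NodeOnWire w a' l ∧
      (if r ≤ k then x < a' else a' < x) ∧
      ∀ y, ValidNode w y → NodeOnWire w y r →
        (if r ≤ k then x < y ∧ y < a' else a' < y ∧ y < x) → y ∈ visitTail w s b ms := by
  induction ms with
  | nil =>
    intro s b hT _ hb hbs hbl hx
    obtain ⟨hs, -⟩ := hT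
    simp only [visitTail] at hx ⊢
    rw [mem_tailList] at hx
    have hsl : s ≠ l := by rintro rfl; exact hbl hbs
    have hsr : s = r := two_wires hx.1.2 hxr hxl hsl hrl
    subst hsr
    have hk : ¬ s ≤ k := by omega
    refine ⟨b, List.mem_cons_self, hb, hbs, hbl, ?_, ?_⟩
    · rw [if_neg hk]; exact hx.2
    · intro y hy hys h
      rw [if_neg hk] at h
      rw [mem_tailList]
      exact ⟨⟨hy, hys⟩, h.1⟩
  | cons m ms ih =>
    intro s b hT hno hb hbs hbl hx
    obtain ⟨hm, hms, hdir, _, hT'⟩ := hT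
    simp only [visitTail, List.mem_append, List.mem_cons] at hx
    have hml := hno m List.mem_cons_self
    rcases hx with hx | rfl | hx
    · rw [mem_segList] at hx
      have hsl : s ≠ l := by rintro rfl; exact hbl hbs
      have hsr : s = r := two_wires hx.1.2 hxr hxl hsl hrl
      subst hsr
      refine ⟨b, List.mem_cons_self, hb, hbs, hbl, ?_, ?_⟩
      · split_ifs at hdir ⊢ <;> omega
      · intro y hy hys h
        simp only [visitTail, List.mem_append]
        left
        rw [mem_segList]
        refine ⟨⟨hy, hys⟩, ?_⟩
        split_ifs at hdir h <;> omega
    · exact absurd hxl hml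
    · obtain ⟨a', h1, h2, h3, h4, h5, h6⟩ := ih _ _ hT'
        (fun t ht => hno t (List.mem_cons_of_mem _ ht)) hm (nodeOn_other _ _ _) hml hx
      refine ⟨a', ?_, h2, h3, h4, h5, ?_⟩
      · simp only [visitTail, List.mem_append, List.mem_cons] at h1 ⊢
        tauto
      · intro y hy hys h
        have := h6 y hy hys h
        simp only [visitTail, List.mem_append, List.mem_cons]
        tauto

lemma sep_seg {w : List ℕ} {k l r a m s : ℕ} {ms : List ℕ}
    (hT : TravelOK w k s m ms) (hno : ∀ t ∈ ms, ¬ NodeOnWire w t l)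
    (hm : ValidNode w m) (hms : NodeOnWire w m s) (hml : ¬ NodeOnWire w m l)
    (ha : ValidNode w a) (har : NodeOnWire w a r) (hal : ¬ NodeOnWire w a l)
    (hdir : if r ≤ k then m < a else a < m)
    (H : ∀ y ∈ a :: segList w r a m, ¬ NodeOnWire w y l → y ∉ m :: visitTail w s m ms) :
    ∀ x ∈ segList w r a m, x ∉ m :: visitTail w s m ms := by
  intro x hx hx'
  by_cases hxl : NodeOnWire w x l
  swap
  · exact H x (List.mem_cons_of_mem _ hx) hxl hx'
  have hrl : r ≠ l := by rintro rfl; exact hal har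
  rw [List.mem_cons] at hx'
  rcases hx' with rfl | hx'
  · exact hml hxl
  rw [mem_segList] at hx
  obtain ⟨a', h1, h2, h3, h4, h5, h6⟩ :=
    visit_start hxl hx.1.2 hrl ms s m hT hno hm hms hml hx'
  by_cases haa : a' = a
  · exact H a List.mem_cons_self hal (haa ▸ h1)
  by_cases hin : min a m < a' ∧ a' < max a m
  · exact H a' (List.mem_cons_of_mem _ ((mem_segList _ _ _ _ _).mpr ⟨⟨h2, h3⟩, hin⟩)) h4 h1
  · refine H a List.mem_cons_self hal (List.mem_cons_of_mem _ (h6 a ha har ?_))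
    split_ifs at hdir h5 ⊢ <;> omega

lemma sep_tail {w : List ℕ} {k l m s : ℕ} {ms : List ℕ}
    (hT : TravelOK w k s m ms) (hno : ∀ t ∈ ms, ¬ NodeOnWire w t l)
    (hm : ValidNode w m) (hms : NodeOnWire w m s) (hml : ¬ NodeOnWire w m l) (hkl : k ≠ l)
    (H : ∀ y ∈ tailList w k m, ¬ NodeOnWire w y l → y ∉ m :: visitTail w s m ms) :
    ∀ x ∈ tailList w k m, x ∉ m :: visitTail w s m ms := by
  intro x hx hx'
  by_cases hxl : NodeOnWire w x l
  swap
  · exact H x hx hxl hx'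
  rw [List.mem_cons] at hx'
  rcases hx' with rfl | hx'
  · exact hml hxl
  rw [mem_tailList] at hx
  obtain ⟨a', h1, h2, h3, h4, h5, h6⟩ :=
    visit_start hxl hx.1.2 hkl ms s m hT hno hm hms hml hx'
  rw [if_pos le_rfl] at h5
  exact H a' ((mem_tailList _ _ _ _).mpr ⟨⟨h2, h3⟩, by omega⟩) h4 h1

lemma nodup_split {S T : List ℕ} (hS : S.Nodup) :
    (S ++ T).Nodup ↔ T.Nodup ∧ ∀ x ∈ S, x ∉ T := by
  rw [List.nodup_append']
  simp only [hS, true_and]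
  rfl

lemma travel_valid {w : List ℕ} {k : ℕ} (ms : List ℕ) : ∀ (s b : ℕ), TravelOK w k s b ms →
    ∀ m ∈ ms, ValidNode w m := by
  induction ms with
  | nil => simp
  | cons m ms ih =>
    intro s b hT x hx
    rcases List.mem_cons.mp hx with rfl | hx
    · exact hT.1
    · exact ih _ _ hT.2.2.2.2 x hx

lemma travel_end {w : List ℕ} {k l : ℕ} (ms : List ℕ) : ∀ (s b : ℕ), TravelOK w k s b ms →
    s ≠ l → (∀ m ∈ ms, ¬ NodeOnWire w m l) → k + 1 ≠ l := by
  induction ms with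
  | nil => intro s b hT hs _ h; exact hs (hT.1.trans h)
  | cons m ms ih =>
    intro s b hT hs hno
    refine ih _ _ hT.2.2.2.2 ?_ (fun t ht => hno t (List.mem_cons_of_mem _ ht))
    intro h
    exact hno m List.mem_cons_self (h ▸ nodeOn_other w m s)

namespace Good

variable {n c ℓ : ℕ} {φ : ℕ → ℕ} {w' w : List ℕ}

lemma not_mem_iff (G : Good n c ℓ φ w' w) {S T S' T' : List ℕ}
    (hS : ∀ x ∈ S, ValidNode w x) (hSS : ∀ x, φ x ∈ S ↔ x ∈ S')
    (hTT : ∀ x, φ x ∈ T ↔ x ∈ T') :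
    (∀ y ∈ S, ¬ NodeOnWire w y ℓ → y ∉ T) ↔ ∀ y ∈ S', y ∉ T' := by
  constructor
  · intro h y hy hy'
    have h1 := (hSS y).mpr hy
    exact h _ h1 ((G.image _ (hS _ h1)).mpr ⟨y, rfl⟩) ((hTT y).mpr hy')
  · intro h y hy hyl hy'
    obtain ⟨j, rfl⟩ := (G.image y (hS y hy)).mp hyl
    exact h j ((hSS j).mp hy) ((hTT j).mp hy')

lemma nodup_travel (G : Good n c ℓ φ w' w) (hcl : (c = 0 ∧ ℓ = n + 1) ∨ (c = 1 ∧ ℓ = 1))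
    {k : ℕ} (hk : 1 ≤ k) (hk' : k ≤ n - 1) (ms : List ℕ) : ∀ (r a : ℕ),
    ValidNode w' a → NodeOnWire w' a r → TravelOK w' k r a ms →
    ((φ a :: visitTail w (r + c) (φ a) (ms.map φ)).Nodup ↔
      (a :: visitTail w' r a ms).Nodup) := by
  induction ms with
  | nil =>
    intro r a ha har hT
    simp only [List.map_nil, visitTail, List.nodup_cons, nodup_tailList, mem_tailList]
    simp
  | cons m ms ih =>
    intro r a ha har hT
    have hTw := (G.travel hcl hk hk' _ r a ha har).mpr hT
    obtain ⟨hm, hmr, hdir, _, hT'⟩ := hT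
    obtain ⟨hm2, hmr2, hdir2, _, hT2⟩ := hTw
    rw [G.other hm] at hT2
    have IH := ih _ _ hm (nodeOn_other w' m r) hT'
    have ha2 := (G.valid a).mpr ha
    have har2 := (G.on ha r).mpr har
    simp only [List.map_cons, visitTail]
    rw [G.other hm]
    have e1 : ∀ (x : ℕ) (S T : List ℕ), S.Nodup → x ∉ S →
        ((x :: (S ++ T)).Nodup ↔ T.Nodup ∧ ∀ y ∈ x :: S, y ∉ T) := by
      intro x S T hS hx
      rw [← List.cons_append, nodup_split (List.nodup_cons.mpr ⟨hx, hS⟩)]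
    rw [e1 _ _ _ (nodup_segList _ _ _ _) (by rw [mem_segList]; omega),
      e1 _ _ _ (nodup_segList _ _ _ _) (by rw [mem_segList]; omega), IH]
    apply and_congr_right
    intro _
    rw [← G.not_mem_iff (S := φ a :: segList w (r + c) (φ a) (φ m))
      (T := φ m :: visitTail w (otherWire w' m r + c) (φ m) (ms.map φ))
      (S' := a :: segList w' r a m) (T' := m :: visitTail w' (otherWire w' m r) m ms)]
    · constructor
      · intro h y hy _; exact h y hy
      · intro h y hy
        rcases List.mem_cons.mp hy with rfl | hy'
        · exact h _ hy (G.not_on ha)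
        · refine sep_seg (l := ℓ) hT2 ?_ hm2 ((G.on hm _).mpr (nodeOn_other w' m r))
            (G.not_on hm) ha2 har2 (G.not_on ha) hdir2 h y hy'
          intro t ht
          obtain ⟨j, hj, rfl⟩ := List.mem_map.mp ht
          exact G.not_on (travel_valid _ _ _ hT' j hj)
    · intro x hx
      rcases List.mem_cons.mp hx with rfl | hx
      · exact ha2
      · exact ((mem_segList _ _ _ _ _).mp hx).1.1
    · intro x
      rw [List.mem_cons, List.mem_cons, G.inj.eq_iff, G.seg_mem ha har hm hmr]
    · intro x
      rw [List.mem_cons, List.mem_cons, G.inj.eq_iff,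
        G.visit_mem x ms _ _ hm (nodeOn_other _ _ _) hT']

lemma path_iff (G : Good n c ℓ φ w' w) (hcl : (c = 0 ∧ ℓ = n + 1) ∨ (c = 1 ∧ ℓ = 1))
    (k : ℕ) (hk : 1 ≤ k) (hk' : k ≤ n - 1) (ms : List ℕ) :
    IsGPPath n w (k + c) (ms.map φ) ↔ IsGPPath (n - 1) w' k ms := by
  cases ms with
  | nil => simp [IsGPPath]
  | cons m ms =>
    simp only [IsGPPath, List.map_cons, visitList]
    have hkl : k + c ≠ ℓ := by omega
    have e1 : (1 ≤ k + c) = (1 ≤ k) := by apply propext; omega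
    have e2 : (k + c ≤ n) = (k ≤ n - 1) := by apply propext; omega
    rw [e1, e2]
    refine and_congr_right fun _ => and_congr_right fun _ => ?_
    simp only [and_assoc]
    rw [G.valid]
    refine and_congr_right fun hm => ?_
    rw [G.on hm]
    refine and_congr_right fun hmk => ?_
    apply and_congr
    · apply G.all_forb hcl hk hk' hkl
      · intro x hx; exact ((mem_tailList _ _ _ _).mp hx).1
      · intro x hx; exact ((mem_tailList _ _ _ _).mp hx).1.1
      · intro x; exact G.tail_mem hm hmk
    rw [G.other hm]
    have hon := nodeOn_other w' m k
    rw [G.travel hcl hk hk' ms _ m hm hon]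
    refine and_congr_right fun hT => ?_
    have hT2 := (G.travel hcl hk hk' ms _ m hm hon).mpr hT
    rw [nodup_split (nodup_tailList _ _ _), nodup_split (nodup_tailList _ _ _),
      G.nodup_travel hcl hk hk' ms _ m hm hon hT]
    refine and_congr_right fun _ => ?_
    rw [← G.not_mem_iff (S := tailList w (k + c) (φ m))
      (T := φ m :: visitTail w (otherWire w' m k + c) (φ m) (ms.map φ))
      (S' := tailList w' k m) (T' := m :: visitTail w' (otherWire w' m k) m ms)]
    · constructor
      · intro h y hy _; exact h y hy
      · intro h
        refine sep_tail (l := ℓ) hT2 ?_ ((G.valid m).mpr hm) ((G.on hm _).mpr hon)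
            (G.not_on hm) hkl h
        intro t ht
        obtain ⟨j, hj, rfl⟩ := List.mem_map.mp ht
        exact G.not_on (travel_valid _ _ _ hT j hj)
    · intro x hx
      exact ((mem_tailList _ _ _ _).mp hx).1.1
    · intro x; exact G.tail_mem hm hmk
    · intro x
      rw [List.mem_cons, List.mem_cons, G.inj.eq_iff, G.visit_mem x ms _ _ hm hon hT]

lemma exists_map (G : Good n c ℓ φ w' w) (ms : List ℕ) (hv : ∀ m ∈ ms, ValidNode w m)
    (hno : ∀ m ∈ ms, ¬ NodeOnWire w m ℓ) : ∃ ms', ms = List.map φ ms' := by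
  induction ms with
  | nil => exact ⟨[], rfl⟩
  | cons m ms ih =>
    obtain ⟨ms', rfl⟩ := ih (fun t ht => hv t (List.mem_cons_of_mem _ ht))
      (fun t ht => hno t (List.mem_cons_of_mem _ ht))
    obtain ⟨j, rfl⟩ := (G.image m (hv m List.mem_cons_self)).mp (hno m List.mem_cons_self)
    exact ⟨j :: ms', rfl⟩

lemma main (G : Good n c ℓ φ w' w) (hcl : (c = 0 ∧ ℓ = n + 1) ∨ (c = 1 ∧ ℓ = 1)) :
    ∃ Ψ : {p // p ∈ GP (n - 1) w'} → {q // q ∈ GP n w},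
        Function.Injective Ψ ∧
        Set.range (fun p => (Ψ p).1) =
          {q | q ∈ GP n w ∧ ∀ t ∈ q.2, ¬ NodeOnWire w t ℓ} := by
  refine ⟨fun p => ⟨(p.1.1 + c, p.1.2.map φ),
    (G.path_iff hcl p.1.1 p.2.1 p.2.2.1 p.1.2).mpr p.2⟩, ?_, ?_⟩
  · rintro ⟨⟨k, ms⟩, hp⟩ ⟨⟨k', ms'⟩, hp'⟩ h
    have h := congrArg Subtype.val h
    simp only [Subtype.mk.injEq, Prod.mk.injEq] at h ⊢
    exact ⟨by omega, List.map_injective_iff.mpr G.inj h.2⟩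
  · ext ⟨k, ms⟩
    simp only [Set.mem_range, Set.mem_ofPred_eq, Subtype.exists, Prod.exists, Prod.mk.injEq]
    constructor
    · rintro ⟨k', ms', hp, rfl, rfl⟩
      refine ⟨(G.path_iff hcl k' hp.1 hp.2.1 ms').mpr hp, ?_⟩
      intro t ht
      obtain ⟨j, hj, rfl⟩ := List.mem_map.mp ht
      apply G.not_on
      obtain ⟨_, _, hp, _⟩ := hp
      cases ms' with
      | nil => exact hp.elim
      | cons m ms' =>
        rcases List.mem_cons.mp hj with rfl | hj
        · exact hp.1
        · exact travel_valid _ _ _ hp.2.2.2 j hj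
    · rintro ⟨hq, hno⟩
      have hq' := hq
      obtain ⟨hk1, hk2, hp, _⟩ := hq'
      cases ms with
      | nil => exact hp.elim
      | cons m ms =>
        obtain ⟨hm, hmk, _, hT⟩ := hp
        have hml := hno m List.mem_cons_self
        have hkl : k ≠ ℓ := by rintro rfl; exact hml hmk
        have hkl' : k + 1 ≠ ℓ := travel_end ms _ _ hT
          (fun h => hml (h ▸ nodeOn_other w m k))
          (fun t ht => hno t (List.mem_cons_of_mem _ ht))
        obtain ⟨ms', hms'⟩ := G.exists_map (m :: ms) (fun t ht => by
          rcases List.mem_cons.mp ht with rfl | ht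
          · exact hm
          · exact travel_valid _ _ _ hT t ht) hno
        obtain ⟨k', rfl⟩ : ∃ k', k = k' + c := ⟨k - c, by omega⟩
        refine ⟨k', ms', ?_, rfl, hms'.symm⟩
        have hqq : IsGPPath n w (k' + c) (m :: ms) := hq
        rw [hms'] at hqq
        exact (G.path_iff hcl k' (by omega) (by omega) ms').mp hqq

end Good

/-! ### Two-moves -/

lemma valid_append {u v : List ℕ} {t : ℕ} (h : ValidNode (u ++ v) t) :
    (∃ p l q, u = p ++ l :: q ∧ t = p.length + 1) ∨
    (∃ p l q, v = p ++ l :: q ∧ t = u.length + p.length + 1) := by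
  obtain ⟨h1, h2⟩ := h
  by_cases ht : t ≤ u.length
  · exact Or.inl (valid_split u t ⟨h1, ht⟩)
  · right
    obtain ⟨p, l, q, h3, h4⟩ := valid_split v (t - u.length)
      ⟨by omega, by rw [List.length_append] at h2; omega⟩
    exact ⟨p, l, q, h3, by omega⟩

lemma sTrans_comm {a b : ℕ} (h : a + 1 < b ∨ b + 1 < a) (x : ℕ) :
    sTrans a (sTrans b x) = sTrans b (sTrans a x) := by
  simp only [sTrans_apply]
  split_ifs <;> omega

lemma step_reduced {n : ℕ} {w w' : List ℕ} (h : TwoMoveStep w w') (hw : IsReduced n w) :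
    IsReduced n w' := by
  obtain ⟨u, v, a, b, hab, rfl, rfl⟩ := h
  obtain ⟨h1, h2, h3⟩ := hw
  refine ⟨by simpa using h1, ?_, ?_⟩
  · intro c hc
    apply h2
    simp only [List.mem_append, List.mem_cons] at hc ⊢
    tauto
  · rw [← h3]
    ext x
    simp only [wordProd_append, wordProd_cons]
    rw [sTrans_comm hab]

/-- the exchange of nodes of a two-move -/
def exch (s x : ℕ) : ℕ := if x = s + 1 then s + 2 else if x = s + 2 then s + 1 else x

lemma exch_exch (s x : ℕ) : exch s (exch s x) = x := by
  unfold exch; split_ifs <;> omega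

lemma step_wires (u v : List ℕ) (a b : ℕ) (hab : a + 1 < b ∨ b + 1 < a) (t : ℕ)
    (ht : ValidNode (u ++ b :: a :: v) t) :
    wireX (u ++ a :: b :: v) (exch u.length t) = wireX (u ++ b :: a :: v) t ∧
    wireY (u ++ a :: b :: v) (exch u.length t) = wireY (u ++ b :: a :: v) t := by
  rcases valid_append ht with ⟨p, l, q, hu, h⟩ | ⟨p, l, q, hv, h⟩
  · have e : exch u.length t = t := by
      have : u.length = p.length + q.length + 1 := by rw [hu]; simp; omega
      unfold exch; split_ifs <;> omega
    have e1 : u ++ a :: b :: v = p ++ l :: (q ++ a :: b :: v) := by simp [hu]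
    have e2 : u ++ b :: a :: v = p ++ l :: (q ++ b :: a :: v) := by simp [hu]
    rw [e, wireX_at e1 h, wireX_at e2 h, wireY_at e1 h, wireY_at e2 h]
    exact ⟨rfl, rfl⟩
  · match p, hv, h with
    | [], hv, h =>
      have e : exch u.length t = (u ++ [a]).length + 1 := by
        simp at h; simp [exch, h]
      simp only [List.nil_append, List.cons.injEq] at hv
      obtain ⟨rfl, rfl⟩ := hv
      have e1 : u ++ a :: b :: v = (u ++ [a]) ++ b :: v := by simp
      have h' : t = u.length + 1 := by simpa using h
      rw [wireX_at e1 e, wireY_at e1 e, wireX_at rfl h', wireY_at rfl h', wordProd_concat,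
        wordProd_concat, sTrans_apply, sTrans_apply]
      constructor <;> congr 1 <;> split_ifs <;> omega
    | [b'], hv, h =>
      have e : exch u.length t = u.length + 1 := by
        simp at h; simp [exch, h]
      simp only [List.cons_append, List.nil_append, List.cons.injEq] at hv
      obtain ⟨rfl, rfl, rfl⟩ := hv
      have e1 : u ++ b :: a :: v = (u ++ [b]) ++ a :: v := by simp
      have h' : t = (u ++ [b]).length + 1 := by simpa using h
      rw [wireX_at rfl e, wireY_at rfl e, wireX_at e1 h', wireY_at e1 h', wordProd_concat,
        wordProd_concat, sTrans_apply, sTrans_apply]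
      constructor <;> congr 1 <;> split_ifs <;> omega
    | b' :: a' :: p, hv, h =>
      simp only [List.cons_append, List.cons.injEq] at hv
      obtain ⟨rfl, rfl, rfl⟩ := hv
      have e : exch u.length t = t := by
        simp at h; unfold exch; split_ifs <;> omega
      have e1 : u ++ a :: b :: (p ++ l :: q) = (u ++ a :: b :: p) ++ l :: q := by simp
      have e2 : u ++ b :: a :: (p ++ l :: q) = (u ++ b :: a :: p) ++ l :: q := by simp
      have h1 : t = (u ++ a :: b :: p).length + 1 := by simp at h ⊢; omega
      have h2 : t = (u ++ b :: a :: p).length + 1 := by simp at h ⊢; omega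
      rw [e, wireX_at e1 h1, wireX_at e2 h2, wireY_at e1 h1, wireY_at e2 h2]
      simp only [wordProd_append, wordProd_cons]
      rw [sTrans_comm hab, sTrans_comm hab]
      exact ⟨rfl, rfl⟩

lemma exch_valid (u v : List ℕ) (a b t : ℕ) :
    ValidNode (u ++ a :: b :: v) (exch u.length t) ↔ ValidNode (u ++ b :: a :: v) t := by
  simp only [ValidNode, List.length_append, List.length_cons]
  unfold exch; split_ifs <;> omega

lemma exch_disjoint (u v : List ℕ) (a b r : ℕ) (hab : a + 1 < b ∨ b + 1 < a)
    (h1 : NodeOnWire (u ++ b :: a :: v) (u.length + 1) r)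
    (h2 : NodeOnWire (u ++ b :: a :: v) (u.length + 2) r) : False := by
  have e1 : u ++ b :: a :: v = (u ++ [b]) ++ a :: v := by simp
  have h' : u.length + 2 = (u ++ [b]).length + 1 := by simp
  unfold NodeOnWire at h1 h2
  rw [wireX_at rfl rfl, wireY_at rfl rfl] at h1
  rw [wireX_at e1 h', wireY_at e1 h', wordProd_concat, wordProd_concat] at h2
  have key : ∀ x y, wordProd u x = r → wordProd u y = r → x = y := fun x y hx hy =>
    (wordProd u).injective (hx.trans hy.symm)
  simp only [sTrans_apply] at h2
  rcases h1 with h1 | h1 <;> rcases h2 with h2 | h2 <;> have := key _ _ h1 h2 <;>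
    split_ifs at this <;> omega

lemma good_step {n c l : ℕ} {φ : ℕ → ℕ} {i' w w2 : List ℕ} (h : TwoMoveStep w w2)
    (G : Good n c l φ i' w2) : ∃ ψ, Good n c l ψ i' w := by
  obtain ⟨u, v, a, b, hab, rfl, rfl⟩ := h
  have hon : ∀ t r, ValidNode (u ++ b :: a :: v) t →
      (NodeOnWire (u ++ a :: b :: v) (exch u.length t) r ↔ NodeOnWire (u ++ b :: a :: v) t r) := by
    intro t r ht
    obtain ⟨h1, h2⟩ := step_wires u v a b hab t ht
    rw [NodeOnWire, NodeOnWire, h1, h2]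
  refine ⟨fun j => exch u.length (φ j), ?_, ?_, ?_, ?_, ?_, ?_, ?_⟩
  · intro x y hxy
    apply G.inj
    have := congrArg (exch u.length) hxy
    simpa only [exch_exch] using this
  · intro j
    rw [exch_valid, G.valid]
  · intro j hj
    rw [(step_wires u v a b hab _ ((G.valid j).mpr hj)).1, G.wx j hj]
  · intro j hj
    rw [(step_wires u v a b hab _ ((G.valid j).mpr hj)).2, G.wy j hj]
  · intro t ht
    have ht' : ValidNode (u ++ b :: a :: v) (exch u.length t) := by
      rw [← exch_valid, exch_exch]; exact ht
    have h1 := hon _ l ht'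
    rw [exch_exch] at h1
    rw [h1, G.image _ ht']
    constructor
    · rintro ⟨j, hj⟩; exact ⟨j, by rw [hj, exch_exch]⟩
    · rintro ⟨j, hj⟩; exact ⟨j, by rw [← hj, exch_exch]⟩
  · intro j j' r hj hj' hr hr' hlt
    have h1 := G.mono j j' r hj hj' hr hr' hlt
    have h2 := (G.on hj r).mpr hr
    have h3 := (G.on hj' r).mpr hr'
    have h4 : ¬ (φ j = u.length + 1 ∧ φ j' = u.length + 2) := by
      rintro ⟨e1, e2⟩
      rw [e1] at h2
      rw [e2] at h3
      exact exch_disjoint u v a b _ hab h2 h3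
    unfold exch
    split_ifs <;> omega
  · intro t ht
    have ht' : ValidNode (u ++ b :: a :: v) (exch u.length t) := by
      rw [← exch_valid, exch_exch]; exact ht
    obtain ⟨h1, h2⟩ := step_wires u v a b hab _ ht'
    rw [exch_exch] at h1 h2
    rw [h1, h2]
    exact G.bounds _ ht'

lemma equiv_reduced {n : ℕ} {w w2 : List ℕ} (h : TwoMoveEquiv w w2) (hw : IsReduced n w) :
    IsReduced n w2 := by
  induction h with
  | refl => exact hw
  | tail _ hs ih => exact step_reduced hs ih

lemma good_equiv {n c l : ℕ} {i' w w2 : List ℕ} (h : TwoMoveEquiv w w2)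
    (G : ∃ φ, Good n c l φ i' w2) : ∃ φ, Good n c l φ i' w := by
  induction h using Relation.ReflTransGen.head_induction_on with
  | refl => exact G
  | head hs _ ih =>
    obtain ⟨φ, hφ⟩ := ih
    exact good_step hs hφ

/-! ### Deleting the long wire -/

/-- the node embedding of a contraction -/
def skip (s d x : ℕ) : ℕ := if x ≤ s then x else x + d

lemma good_base {n c e : ℕ} {u d v u' v' : List ℕ} (hw : IsReduced n (u ++ d ++ v))
    (hdl : d.length = n) (hul : u'.length = u.length) (hvl : v'.length = v.length)
    (hall : ∀ j, ValidNode (u ++ d ++ v) j → (NodeOnWire (u ++ d ++ v) j e ↔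
      u.length < j ∧ j ≤ u.length + d.length))
    (hwires : ∀ j, ValidNode (u' ++ v') j →
      wireX (u ++ d ++ v) (skip u.length d.length j) = wireX (u' ++ v') j + c ∧
      wireY (u ++ d ++ v) (skip u.length d.length j) = wireY (u' ++ v') j + c) :
    Good n c e (skip u.length d.length) (u' ++ v') (u ++ d ++ v) := by
  have hmono : StrictMono (skip u.length d.length) := by
    intro a b hab
    unfold skip
    split_ifs <;> omega
  refine ⟨hmono.injective, ?_, fun j hj => (hwires j hj).1, fun j hj => (hwires j hj).2, ?_,
    fun j j' _ _ _ _ _ h => hmono h, wire_bounds hw.2.1⟩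
  · intro j
    simp only [ValidNode, List.length_append]
    unfold skip
    split_ifs <;> omega
  · intro t ht
    rw [hall t ht]
    constructor
    · intro h
      by_cases h1 : t ≤ u.length
      · exact ⟨t, by simp [skip, h1]⟩
      · refine ⟨t - d.length, ?_⟩
        unfold skip
        split_ifs <;> omega
    · rintro ⟨j, rfl⟩
      unfold skip
      split_ifs <;> omega

lemma desc_node {n : ℕ} (u v : List ℕ) (t : ℕ) (ht : t < n) :
    wireX (u ++ descWord n ++ v) (u.length + t + 1) = wordProd u (n - t) ∧
    wireY (u ++ descWord n ++ v) (u.length + t + 1) = wordProd u (n + 1) := by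
  obtain ⟨q, hq⟩ := descWord_split n t ht
  have e1 : u ++ descWord n ++ v = (u ++ descPre n t) ++ (n - t) :: (q ++ v) := by simp [hq]
  have h1 : u.length + t + 1 = (u ++ descPre n t).length + 1 := by simp [descPre_length]
  rw [wireX_at e1 h1, wireY_at e1 h1, wordProd_append, wordProd_append,
    descPre_prod n t _ (by omega) (by omega), descPre_prod n t _ (by omega) (by omega)]
  constructor <;> congr 1 <;> split_ifs <;> omega

lemma asc_node {n : ℕ} (u v : List ℕ) (t : ℕ) (ht : t < n) :
    wireX (u ++ ascWord n ++ v) (u.length + t + 1) = wordProd u 1 ∧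
    wireY (u ++ ascWord n ++ v) (u.length + t + 1) = wordProd u (t + 2) := by
  obtain ⟨q, hq⟩ := ascWord_split n t ht
  have e1 : u ++ ascWord n ++ v = (u ++ ascWord t) ++ (t + 1) :: (q ++ v) := by simp [hq]
  have h1 : u.length + t + 1 = (u ++ ascWord t).length + 1 := by simp [ascWord_length]
  rw [wireX_at e1 h1, wireY_at e1 h1, wordProd_append, wordProd_append,
    ascWord_prod t _ (by omega), ascWord_prod t _ (by omega)]
  constructor <;> congr 1 <;> split_ifs <;> omega

lemma good_D {n : ℕ} {u v : List ℕ} (hw : IsReduced n (u ++ descWord n ++ v)) :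
    ∃ φ, Good n 0 (n + 1) φ (u ++ v.map (· - 1)) (u ++ descWord n ++ v) := by
  have hdl := descWord_length n
  obtain ⟨hfix, hon⟩ := longest_wire hw (n + 1) (by omega) (fun x hx1 hx2 hx => by
    refine ⟨u.length + (n - x) + 1, by omega, by omega, ?_⟩
    obtain ⟨h1, h2⟩ := desc_node (n := n) u v (n - x) (by omega)
    rw [h1, h2, show n - (n - x) = x by omega, Finset.pair_comm])
  -- the letters of v are at least two
  have hv : ∀ a ∈ v, 2 ≤ a ∧ a ≤ n := by
    intro a ha
    obtain ⟨p, q, hpq⟩ := List.append_of_mem ha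
    have hb := hw.2.1 a (by simp [ha])
    by_contra hcon
    have ha1 : a = 1 := by omega
    subst ha1
    have e : u ++ descWord n ++ v = (u ++ descWord n ++ p) ++ 1 :: q := by simp [hpq]
    have e' : (u ++ descWord n) ++ p ++ (1 :: q) = u ++ descWord n ++ v := by simp [hpq]
    have h1 := no_cross (u ++ descWord n) p 1 (n + 1)
      (by rw [wordProd_append, descWord_eq, descPre_prod n n _ le_rfl (by omega)]; simpa using hfix)
      (1 :: q) (fun t ht h1 _ hn => by
        rw [e'] at ht hn
        have := hon t ht hn
        rw [List.length_append] at h1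
        omega)
    have h2 := hon _ (valid_mk e rfl) (Or.inl ((wireX_at e rfl).trans h1))
    simp only [List.length_append] at h2
    omega
  refine ⟨_, good_base hw hdl rfl (by simp) ?_ ?_⟩
  · intro j hj
    refine ⟨hon j hj, fun h => ?_⟩
    obtain ⟨h1, h2⟩ := desc_node (n := n) u v (j - u.length - 1) (by omega)
    rw [show u.length + (j - u.length - 1) + 1 = j by omega] at h2
    exact Or.inr (h2.trans hfix)
  · intro j hj
    rcases valid_append hj with ⟨p, l, q, hu, h⟩ | ⟨p', l', q', hv', h⟩
    · have e : skip u.length (descWord n).length j = j := by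
        have : j ≤ u.length := by rw [hu, h]; simp
        simp [skip, this]
      have e1 : u ++ descWord n ++ v = p ++ l :: (q ++ descWord n ++ v) := by simp [hu]
      have e2 : u ++ v.map (· - 1) = p ++ l :: (q ++ v.map (· - 1)) := by simp [hu]
      rw [e, wireX_at e1 h, wireX_at e2 h, wireY_at e1 h, wireY_at e2 h]
      exact ⟨rfl, rfl⟩
    · obtain ⟨p, s, rfl, rfl, hs⟩ := List.map_eq_append_iff.mp hv'
      obtain ⟨l, q, rfl, rfl, rfl⟩ := List.map_eq_cons_iff.mp hs
      rw [List.length_map] at h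
      have hl := hv l (by simp)
      have hp : ∀ a ∈ p, 2 ≤ a ∧ a ≤ n := fun a ha => hv a (by simp [ha])
      have e1 : u ++ descWord n ++ (p ++ l :: q) = (u ++ descWord n ++ p) ++ l :: q := by simp
      have e2 : u ++ (p ++ l :: q).map (· - 1) =
        (u ++ p.map (· - 1)) ++ (l - 1) :: q.map (· - 1) := by simp
      have h1 : skip u.length (descWord n).length j = (u ++ descWord n ++ p).length + 1 := by
        simp only [List.length_append]
        unfold skip
        split_ifs <;> omega
      have h2 : j = (u ++ p.map (· - 1)).length + 1 := by simp; omega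
      rw [wireX_at e1 h1, wireY_at e1 h1, wireX_at e2 h2, wireY_at e2 h2]
      have key : ∀ x, 1 ≤ x → x ≤ n → wordProd (u ++ descWord n ++ p) (x + 1) =
          wordProd (u ++ p.map (· - 1)) x := by
        intro x hx1 hx2
        have hm := wordProd_mem 1 n (p.map (· - 1)) (by
          intro a ha
          obtain ⟨b, hb, rfl⟩ := List.mem_map.mp ha
          have := hp b hb
          constructor <;> omega) x ⟨hx1, hx2⟩
        rw [wordProd_append, wordProd_append, wordProd_append,
          wordProd_shift p (fun a ha => by have := hp a ha; omega), descWord_eq,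
          descPre_prod n n _ le_rfl (by omega)]
        congr 1
        split_ifs <;> omega
      have k1 := key (l - 1) (by omega) (by omega)
      have k2 := key (l - 1 + 1) (by omega) (by omega)
      rw [show l - 1 + 1 = l by omega] at k1 k2
      rw [show l - 1 + 1 = l by omega]
      exact ⟨k1, k2⟩

lemma good_A {n : ℕ} {u v : List ℕ} (hw : IsReduced n (u ++ ascWord n ++ v)) :
    ∃ φ, Good n 1 1 φ (u.map (· - 1) ++ v) (u ++ ascWord n ++ v) := by
  have hdl := ascWord_length n
  obtain ⟨hfix, hon⟩ := longest_wire hw 1 (by omega) (fun x hx1 hx2 hx => by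
    refine ⟨u.length + (x - 2) + 1, by omega, by omega, ?_⟩
    obtain ⟨h1, h2⟩ := asc_node (n := n) u v (x - 2) (by omega)
    rw [h1, h2, show x - 2 + 2 = x by omega])
  have hu : ∀ a ∈ u, 1 ≤ a := fun a ha => (hw.2.1 a (by simp [ha])).1
  -- the letters of v are less than n
  have hv : ∀ a ∈ v, 1 ≤ a ∧ a + 1 ≤ n := by
    intro a ha
    obtain ⟨p, q, hpq⟩ := List.append_of_mem ha
    have hb := hw.2.1 a (by simp [ha])
    by_contra hcon
    have ha1 : a = n := by omega
    have e : u ++ ascWord n ++ v = (u ++ ascWord n ++ p) ++ a :: q := by simp [hpq]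
    have e' : (u ++ ascWord n) ++ p ++ (a :: q) = u ++ ascWord n ++ v := by simp [hpq]
    have h1 := no_cross (u ++ ascWord n) p (a + 1) 1
      (by rw [wordProd_append, ascWord_prod n _ (by omega), ha1]; simpa using hfix)
      (a :: q) (fun t ht h1 _ hn => by
        rw [e'] at ht hn
        have := hon t ht hn
        rw [List.length_append] at h1
        omega)
    have h2 := hon _ (valid_mk e rfl) (Or.inr ((wireY_at e rfl).trans h1))
    simp only [List.length_append] at h2
    omega
  refine ⟨_, good_base hw hdl (by simp) rfl ?_ ?_⟩
  · intro j hj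
    refine ⟨hon j hj, fun h => ?_⟩
    obtain ⟨h1, h2⟩ := asc_node (n := n) u v (j - u.length - 1) (by omega)
    rw [show u.length + (j - u.length - 1) + 1 = j by omega] at h1
    exact Or.inl (h1.trans hfix)
  · intro j hj
    rcases valid_append hj with ⟨p', l', q', hu', h⟩ | ⟨p, l, q, hv', h⟩
    · obtain ⟨p, s, rfl, rfl, hs⟩ := List.map_eq_append_iff.mp hu'
      obtain ⟨l, q, rfl, rfl, rfl⟩ := List.map_eq_cons_iff.mp hs
      rw [List.length_map] at h
      have e : skip (p ++ l :: q).length (ascWord n).length j = j := by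
        have : j ≤ (p ++ l :: q).length := by rw [h]; simp
        unfold skip
        rw [if_pos this]
      have e1 : (p ++ l :: q) ++ ascWord n ++ v = p ++ l :: (q ++ ascWord n ++ v) := by simp
      have e2 : (p ++ l :: q).map (· - 1) ++ v =
        p.map (· - 1) ++ (l - 1) :: (q.map (· - 1) ++ v) := by simp
      have h2 : j = (p.map (· - 1)).length + 1 := by simpa using h
      rw [e, wireX_at e1 h, wireX_at e2 h2, wireY_at e1 h, wireY_at e2 h2]
      have hl := hu l (by simp)
      have key := wordProd_shift p (fun a ha => hu a (by simp [ha]))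
      rw [← key, ← key, show l - 1 + 1 = l by omega]
      exact ⟨rfl, rfl⟩
    · subst hv'
      rw [List.length_map] at h
      have hl := hv l (by simp)
      have hp : ∀ a ∈ p, 1 ≤ a ∧ a + 1 ≤ n := fun a ha => hv a (by simp [ha])
      have e1 : u ++ ascWord n ++ (p ++ l :: q) = (u ++ ascWord n ++ p) ++ l :: q := by simp
      have e2 : u.map (· - 1) ++ (p ++ l :: q) = (u.map (· - 1) ++ p) ++ l :: q := by simp
      have h1 : skip u.length (ascWord n).length j = (u ++ ascWord n ++ p).length + 1 := by
        simp only [List.length_append]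
        unfold skip
        split_ifs <;> omega
      have h2 : j = (u.map (· - 1) ++ p).length + 1 := by simp; omega
      rw [wireX_at e1 h1, wireY_at e1 h1, wireX_at e2 h2, wireY_at e2 h2]
      have key : ∀ x, 1 ≤ x → x ≤ n → wordProd (u ++ ascWord n ++ p) x =
          wordProd (u.map (· - 1) ++ p) x + 1 := by
        intro x hx1 hx2
        have hm := wordProd_mem 1 n p hp x ⟨hx1, hx2⟩
        rw [wordProd_append, wordProd_append, wordProd_append, ← wordProd_shift u hu,
          ascWord_prod n _ (by omega), if_pos hm.2]
      exact ⟨key _ (by omega) (by omega), key _ (by omega) (by omega)⟩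

/-- Corollary: old paths under contraction.
For `i ∈ Σ_{n+1}` and `• ∈ {A, D}` there is a canonical injection
`GP(C_•(i)) ↪ GP(i)` whose image is exactly the set of rigorous paths of `G(i)`
none of whose switching nodes lies on the wire `ℓ_•`, with `ℓ_D = ℓ_{n+1}` and
`ℓ_A = ℓ_1`. -/
theorem statement9 (n : ℕ) (hn : 1 ≤ n) (i : List ℕ) (hi : IsReduced n i) :
    (∀ i', IsContractionD n i i' →
      ∃ Ψ : {p // p ∈ GP (n - 1) i'} → {q // q ∈ GP n i},
        Function.Injective Ψ ∧
        Set.range (fun p => (Ψ p).1) =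
          {q | q ∈ GP n i ∧ ∀ t ∈ q.2, ¬ NodeOnWire i t (n + 1)}) ∧
    (∀ i', IsContractionA n i i' →
      ∃ Ψ : {p // p ∈ GP (n - 1) i'} → {q // q ∈ GP n i},
        Function.Injective Ψ ∧
        Set.range (fun p => (Ψ p).1) =
          {q | q ∈ GP n i ∧ ∀ t ∈ q.2, ¬ NodeOnWire i t 1}) := by
  constructor
  · rintro i' ⟨u, v, heq, rfl⟩
    obtain ⟨φ, G⟩ := good_equiv heq (good_D (equiv_reduced heq hi))
    exact G.main (Or.inl ⟨rfl, rfl⟩)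
  · rintro i' ⟨u, v, heq, rfl⟩
    obtain ⟨φ, G⟩ := good_equiv heq (good_A (equiv_reduced heq hi))
    exact G.main (Or.inr ⟨rfl, rfl⟩)

end StringPolytope
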